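/- Let Ω be a totally ordered alphabet and extend the order to words lexicographically (with u < uv for every nonempty v, and ua v < u b v' whenever a < b are letters). A nonempty word w is Lyndon if for every factorization w = uv into nonempty words one has w < v. Then the shuffle Hopf algebra (H_W, ⧢, ∅, Δ, δ_∅) over a field of characteristic zero is, as a commutative algebra, freely generated by the Lyndon words; i.e. it is a polynomial algebra on the set of Lyndon words (Radford's theorem). -/

import Mathlib

open scoped TensorProduct
noncomputable section

variable (k : Type*) [Field k] {Ω : Type*}

/-- The vector space of words over the alphabet `Ω`. -/
abbrev HW (k : Type*) [Field k] (Ω : Type*) := List Ω →₀ k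

/-- Shuffle product of two words. -/
def shW : List Ω → List Ω → HW k Ω
  | [], v => Finsupp.single v 1
  | u, [] => Finsupp.single u 1
  | a :: u, b :: v =>
      Finsupp.mapDomain (a :: ·) (shW u (b :: v)) +
      Finsupp.mapDomain (b :: ·) (shW (a :: u) v)
  termination_by u v => u.length + v.length

/-- Bilinear extension of the shuffle product to `HW k Ω`. -/
def shL : HW k Ω →ₗ[k] HW k Ω →ₗ[k] HW k Ω :=
  Finsupp.lift (HW k Ω →ₗ[k] HW k Ω) k (List Ω) fun u =>
    Finsupp.lift (HW k Ω) k (List Ω) fun v => shW k u v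

/-- A nonempty word `w` is Lyndon if for every factorization `w = uv` into
nonempty words one has `w < v` in the lexicographic order. -/
def IsLyndon [LinearOrder Ω] (w : List Ω) : Prop :=
  w ≠ [] ∧ ∀ u v : List Ω, u ≠ [] → v ≠ [] → w = u ++ v → List.Lex (· < ·) w v


section Algebra

lemma shW_nil_left (v : List Ω) : shW k [] v = Finsupp.single v 1 := by
  rw [shW]

lemma shW_nil_right (u : List Ω) : shW k u [] = Finsupp.single u 1 := by
  cases u with
  | nil => rw [shW]
  | cons a u => rw [shW]; simp

lemma shW_cons_cons (a b : Ω) (u v : List Ω) :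
    shW k (a :: u) (b :: v) =
      Finsupp.mapDomain (a :: ·) (shW k u (b :: v)) +
      Finsupp.mapDomain (b :: ·) (shW k (a :: u) v) := by
  rw [shW]

lemma shL_single_single (u v : List Ω) (c d : k) :
    shL k (Finsupp.single u c) (Finsupp.single v d) = (c * d) • shW k u v := by
  simp [shL, mul_smul]

lemma shW_comm (u v : List Ω) : shW k u v = shW k v u := by
  match u, v with
  | [], v => rw [shW_nil_left, shW_nil_right]
  | u, [] => rw [shW_nil_left, shW_nil_right]
  | a :: u, b :: v =>
    rw [shW_cons_cons, shW_cons_cons, shW_comm u (b :: v), shW_comm (a :: u) v, add_comm]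
  termination_by u.length + v.length

lemma shL_comm (x y : HW k Ω) : shL k x y = shL k y x := by
  induction x using Finsupp.induction_linear with
  | zero => simp
  | add x₁ x₂ h₁ h₂ => simp [h₁, h₂]
  | single u c =>
    induction y using Finsupp.induction_linear with
    | zero => simp
    | add y₁ y₂ h₁ h₂ => simp [h₁, h₂]
    | single v d => rw [shL_single_single, shL_single_single, shW_comm, mul_comm]

lemma shL_one_left (x : HW k Ω) : shL k (Finsupp.single [] 1) x = x := by
  induction x using Finsupp.induction_linear with
  | zero => simp
  | add x₁ x₂ h₁ h₂ => simp [h₁, h₂]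
  | single u c => simp [shL_single_single, shW_nil_left]

lemma shL_mapDomain_cons (a b : Ω) (x y : HW k Ω) :
    shL k (Finsupp.mapDomain (a :: ·) x) (Finsupp.mapDomain (b :: ·) y) =
      Finsupp.mapDomain (a :: ·) (shL k x (Finsupp.mapDomain (b :: ·) y)) +
      Finsupp.mapDomain (b :: ·) (shL k (Finsupp.mapDomain (a :: ·) x) y) := by
  induction x using Finsupp.induction_linear with
  | zero => simp
  | add x₁ x₂ h₁ h₂ => simp only [Finsupp.mapDomain_add, map_add, LinearMap.add_apply, h₁, h₂]; abel
  | single u c =>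
    induction y using Finsupp.induction_linear with
    | zero => simp
    | add y₁ y₂ h₁ h₂ => simp only [Finsupp.mapDomain_add, map_add, h₁, h₂]; abel
    | single v d =>
      simp only [Finsupp.mapDomain_single, shL_single_single, shW_cons_cons,
        Finsupp.mapDomain_smul, smul_add]

lemma shL_assoc_words (u v w : List Ω) :
    shL k (shW k u v) (Finsupp.single w 1) = shL k (Finsupp.single u 1) (shW k v w) := by
  match u, v, w with
  | [], v, w => simp [shW_nil_left, shL_one_left, shL_single_single]
  | u, [], w => simp [shW_nil_left, shW_nil_right, shL_single_single]
  | u, v, [] => simp [shW_nil_right, shL_comm k _ (Finsupp.single [] 1), shL_one_left,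
      shL_single_single]
  | a :: u, b :: v, c :: w =>
    have h₁ := shL_assoc_words u (b :: v) (c :: w)
    have h₂ := shL_assoc_words (a :: u) v (c :: w)
    have h₃ := shL_assoc_words (a :: u) (b :: v) w
    have hs (d : Ω) (t : List Ω) :
        Finsupp.single (d :: t) (1 : k) =
          Finsupp.mapDomain (d :: ·) (Finsupp.single t 1) := by simp
    have h₄ := congrArg (Finsupp.mapDomain (c :: ·)) h₃
    rw [shW_cons_cons k a b, map_add, LinearMap.add_apply, Finsupp.mapDomain_add] at h₄
    rw [shW_cons_cons k b c, map_add] at h₁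
    rw [shW_cons_cons k a b, shW_cons_cons k b c, map_add, LinearMap.add_apply, hs c w,
      shL_mapDomain_cons, shL_mapDomain_cons, ← hs c w, h₁, h₂, hs a u, map_add,
      shL_mapDomain_cons, shL_mapDomain_cons, ← hs a u, ← h₄, Finsupp.mapDomain_add]
    abel
  termination_by u.length + v.length + w.length

lemma shL_assoc (x y z : HW k Ω) : shL k (shL k x y) z = shL k x (shL k y z) := by
  induction x using Finsupp.induction_linear with
  | zero => simp
  | add x₁ x₂ h₁ h₂ => simp [h₁, h₂]
  | single u c =>
    induction y using Finsupp.induction_linear with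
    | zero => simp
    | add y₁ y₂ h₁ h₂ => simp [h₁, h₂]
    | single v d =>
      induction z using Finsupp.induction_linear with
      | zero => simp
      | add z₁ z₂ h₁ h₂ => simp [h₁, h₂]
      | single w e =>
        have h := shL_assoc_words k u v w
        rw [shL_single_single, shL_single_single, ← mul_one e, ← smul_eq_mul e,
          ← Finsupp.smul_single, ← mul_one c, ← smul_eq_mul c, ← Finsupp.smul_single]
        simp only [map_smul, LinearMap.smul_apply, h, smul_smul, smul_eq_mul]
        congr 1
        ring

/-- The space of words, regarded as a ring under the shuffle product. -/
def ShuffleAlgebra (k : Type*) [Field k] (Ω : Type*) := HW k Ω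

namespace ShuffleAlgebra

instance : AddCommGroup (ShuffleAlgebra k Ω) := inferInstanceAs (AddCommGroup (HW k Ω))

instance : Module k (ShuffleAlgebra k Ω) := inferInstanceAs (Module k (HW k Ω))

/-- The identity map from the shuffle algebra to the space of words. -/
def toHW : ShuffleAlgebra k Ω ≃ₗ[k] HW k Ω := LinearEquiv.refl k (HW k Ω)

instance : CommRing (ShuffleAlgebra k Ω) where
  mul x y := (shL k x y : HW k Ω)
  one := (Finsupp.single [] 1 : HW k Ω)
  left_distrib x y z := map_add (shL k x) y z
  right_distrib x y z := LinearMap.map_add₂ (shL k) x y z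
  zero_mul x := LinearMap.map_zero₂ (shL k) x
  mul_zero x := map_zero (shL k x)
  mul_assoc x y z := shL_assoc k x y z
  one_mul x := shL_one_left k x
  mul_one x := (shL_comm k x _).trans (shL_one_left k x)
  mul_comm x y := shL_comm k x y
  zsmul := zsmulRec
  sub_eq_add_neg := sub_eq_add_neg
  neg_add_cancel := neg_add_cancel

instance : Algebra k (ShuffleAlgebra k Ω) :=
  Algebra.ofModule (fun c x y => LinearMap.map_smul₂ (shL k) c x y)
    (fun c x y => map_smul (shL k x) c y)

lemma toHW_mul (x y : ShuffleAlgebra k Ω) :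
    toHW k (x * y) = shL k (toHW k x) (toHW k y) := rfl

lemma toHW_one : toHW k (1 : ShuffleAlgebra k Ω) = Finsupp.single [] 1 := rfl

end ShuffleAlgebra

end Algebra

section Lexicographic

variable [LinearOrder Ω]

lemma cons_lex_le_cons_iff {a b : Ω} {u v : List Ω} :
    a :: u ≤ b :: v ↔ a < b ∨ a = b ∧ u ≤ v := by
  rw [← not_lt, List.cons_lt_cons_iff, ← not_lt]
  rcases lt_trichotomy a b with h | rfl | h
  · simp [h, h.not_gt, h.ne']
  · simp
  · simp [h, h.not_gt, h.ne']

lemma lex_le_append (u v : List Ω) : u ≤ u ++ v := by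
  induction u with
  | nil => exact not_lt.1 (List.not_lt_nil _)
  | cons a u ih => exact cons_lex_le_cons_iff.2 (.inr ⟨rfl, ih⟩)

lemma prefix_or_append_lt_of_lt {u v : List Ω} (h : u < v) (w : List Ω) :
    u <+: v ∨ u ++ w < v := by
  induction u generalizing v with
  | nil => exact .inl List.nil_prefix
  | cons a u ih =>
    cases v with
    | nil => exact absurd h (List.not_lt_nil _)
    | cons b v =>
      rcases List.cons_lt_cons_iff.1 h with hab | ⟨rfl, huv⟩
      · exact .inr (List.cons_lt_cons_iff.2 (.inl hab))
      · refine (ih huv).imp (fun hp => ?_) fun hl => ?_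
        · exact (List.prefix_cons_inj a).2 hp
        · exact List.cons_lt_cons_iff.2 (.inr ⟨rfl, hl⟩)

end Lexicographic

section Shuffles

/-- `IsShuffle u v w` says that `w` is one of the shuffles of `u` and `v`. -/
inductive IsShuffle : List Ω → List Ω → List Ω → Prop
  | nil : IsShuffle [] [] []
  | left (a : Ω) {u v w : List Ω} : IsShuffle u v w → IsShuffle (a :: u) v (a :: w)
  | right (b : Ω) {u v w : List Ω} : IsShuffle u v w → IsShuffle u (b :: v) (b :: w)

namespace IsShuffle

lemma nil_left (v : List Ω) : IsShuffle [] v v := by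
  induction v with
  | nil => exact nil
  | cons b v ih => exact ih.right b

lemma append (u v : List Ω) : IsShuffle u v (u ++ v) := by
  induction u with
  | nil => exact nil_left v
  | cons a u ih => exact ih.left a

lemma nil_right (u : List Ω) : IsShuffle u [] u := by
  simpa using append u []

lemma eq_of_nil_left {v w : List Ω} (h : IsShuffle [] v w) : w = v := by
  induction v generalizing w with
  | nil => cases h; rfl
  | cons b v ih => cases h with | right _ h => rw [ih h]

lemma perm {u v w : List Ω} (h : IsShuffle u v w) : w.Perm (u ++ v) := by
  induction h with
  | nil => exact .refl _
  | left a _ ih => exact ih.cons a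
  | right b _ ih => exact (ih.cons b).trans List.perm_middle.symm

variable [LinearOrder Ω]

lemma exists_lt {u v l w : List Ω} (h : IsShuffle u l w) (hlen : u.length = v.length)
    (huv : u < v) : ∃ w', IsShuffle v l w' ∧ w < w' := by
  induction h generalizing v with
  | nil => exact absurd huv (by simp [List.length_eq_zero_iff.1 hlen.symm])
  | left a h ih =>
    cases v with
    | nil => simp at hlen
    | cons b v =>
      rcases List.cons_lt_cons_iff.1 huv with hab | ⟨rfl, huv'⟩
      · exact ⟨_, append _ _, List.cons_lt_cons_iff.2 (.inl hab)⟩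
      · obtain ⟨w', hw', hlt⟩ := ih (by simpa using hlen) huv'
        exact ⟨_, hw'.left a, List.cons_lt_cons_iff.2 (.inr ⟨rfl, hlt⟩)⟩
  | right b h ih =>
    obtain ⟨w', hw', hlt⟩ := ih hlen huv
    exact ⟨_, hw'.right b, List.cons_lt_cons_iff.2 (.inr ⟨rfl, hlt⟩)⟩

/-- Moving a common prefix from the larger word to the smaller one does not decrease the
largest shuffle. -/
lemma exists_le_of_append {x u v w : List Ω} (h : IsShuffle (x ++ u) v w) (hvu : v ≤ u) :
    ∃ w', IsShuffle u (x ++ v) w' ∧ w ≤ w' := by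
  generalize hy : x ++ u = y at h
  induction h generalizing x u with
  | nil =>
    obtain ⟨rfl, rfl⟩ := List.append_eq_nil_iff.1 hy
    exact ⟨_, nil, le_rfl⟩
  | left a h ih =>
    cases x with
    | nil =>
      obtain rfl : u = _ := hy
      exact ⟨_, h.left a, le_rfl⟩
    | cons c x =>
      obtain ⟨rfl, rfl⟩ := List.cons.inj hy
      obtain ⟨w', hw', hle⟩ := ih hvu rfl
      exact ⟨_, hw'.right c, cons_lex_le_cons_iff.2 (.inr ⟨rfl, hle⟩)⟩
  | right b h ih =>
    cases u with
    | nil => exact absurd hvu (not_le.2 (List.nil_lt_cons _ _))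
    | cons c u =>
      rcases cons_lex_le_cons_iff.1 hvu with hbc | ⟨rfl, hvu'⟩
      · exact ⟨_, (append _ _).left c, cons_lex_le_cons_iff.2 (.inl hbc)⟩
      · obtain ⟨w', hw', hle⟩ := ih (x := x ++ [b]) hvu' (by simpa using hy)
        refine ⟨_, IsShuffle.left b (w := w') (by simpa using hw'), ?_⟩
        exact cons_lex_le_cons_iff.2 (.inr ⟨rfl, hle⟩)

lemma le_append {v l w : List Ω} (h : IsShuffle v l w)
    (hv : ∀ p, p ≠ [] → p <:+ v → l ≤ p) : w ≤ v ++ l := by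
  induction v generalizing w with
  | nil => exact h.eq_of_nil_left.le
  | cons a v ih =>
    obtain ⟨w', hw', hle⟩ : ∃ w', IsShuffle v l w' ∧ w ≤ a :: w' := by
      have hl := hv (a :: v) (by simp) List.suffix_rfl
      cases h with
      | left _ h => exact ⟨_, h, le_rfl⟩
      | right b h =>
        rcases cons_lex_le_cons_iff.1 hl with hba | ⟨rfl, hlv⟩
        · exact ⟨_, append _ _, cons_lex_le_cons_iff.2 (.inl hba)⟩
        · obtain ⟨w', hw', hle⟩ := exists_le_of_append (x := [b]) h hlv
          exact ⟨w', hw', cons_lex_le_cons_iff.2 (.inr ⟨rfl, hle⟩)⟩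
    refine hle.trans (cons_lex_le_cons_iff.2 (.inr ⟨rfl, ih hw' fun p hp hs => ?_⟩))
    exact hv p hp (hs.trans (List.suffix_cons a v))

end IsShuffle

lemma mapDomain_cons_apply_nil (a : Ω) (x : HW k Ω) :
    Finsupp.mapDomain (a :: ·) x [] = 0 :=
  Finsupp.mapDomain_of_notMem_range _ _ (by simp)

lemma mapDomain_cons_apply_cons_self (a : Ω) (x : HW k Ω) (w : List Ω) :
    Finsupp.mapDomain (a :: ·) x (a :: w) = x w :=
  Finsupp.mapDomain_apply List.cons_injective x w

lemma mapDomain_cons_apply_cons_of_ne {a b : Ω} (h : a ≠ b) (x : HW k Ω) (w : List Ω) :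
    Finsupp.mapDomain (a :: ·) x (b :: w) = 0 :=
  Finsupp.mapDomain_of_notMem_range _ _ (by simp [h])

lemma exists_of_mapDomain_cons_ne_zero {a : Ω} {x : HW k Ω} {w : List Ω}
    (h : Finsupp.mapDomain (a :: ·) x w ≠ 0) : ∃ w', w = a :: w' ∧ x w' ≠ 0 := by
  cases w with
  | nil => exact absurd (mapDomain_cons_apply_nil k a x) h
  | cons b w =>
    by_cases hab : a = b
    · subst hab
      exact ⟨w, rfl, by rwa [mapDomain_cons_apply_cons_self] at h⟩
    · exact absurd (mapDomain_cons_apply_cons_of_ne k hab x w) h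

lemma isShuffle_of_shW_ne_zero {u v w : List Ω} (h : shW k u v w ≠ 0) : IsShuffle u v w := by
  match u, v with
  | [], v =>
    rw [shW_nil_left] at h
    obtain rfl : v = w := by by_contra hvw; exact h (Finsupp.single_eq_of_ne' hvw)
    exact .nil_left v
  | u, [] =>
    rw [shW_nil_right] at h
    obtain rfl : u = w := by by_contra huw; exact h (Finsupp.single_eq_of_ne' huw)
    exact .nil_right u
  | a :: u, b :: v =>
    rw [shW_cons_cons, Finsupp.add_apply] at h
    by_cases h₁ : Finsupp.mapDomain (a :: ·) (shW k u (b :: v)) w = 0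
    · rw [h₁, zero_add] at h
      obtain ⟨w', rfl, hw'⟩ := exists_of_mapDomain_cons_ne_zero k h
      exact (isShuffle_of_shW_ne_zero hw').right b
    · obtain ⟨w', rfl, hw'⟩ := exists_of_mapDomain_cons_ne_zero k h₁
      exact (isShuffle_of_shW_ne_zero hw').left a
  termination_by u.length + v.length

lemma exists_nat_mapDomain_cons_apply {a : Ω} {x : HW k Ω} (hx : ∀ w, ∃ n : ℕ, x w = n)
    (w : List Ω) : ∃ n : ℕ, Finsupp.mapDomain (a :: ·) x w = n := by
  by_cases h : Finsupp.mapDomain (a :: ·) x w = 0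
  · exact ⟨0, by simpa using h⟩
  · obtain ⟨w', rfl, -⟩ := exists_of_mapDomain_cons_ne_zero k h
    rw [mapDomain_cons_apply_cons_self]
    exact hx w'

lemma exists_nat_shW_apply (u v w : List Ω) : ∃ n : ℕ, shW k u v w = n := by
  classical
  match u, v with
  | [], v => exact ⟨if v = w then 1 else 0, by simp [shW_nil_left, Finsupp.single_apply]⟩
  | u, [] => exact ⟨if u = w then 1 else 0, by simp [shW_nil_right, Finsupp.single_apply]⟩
  | a :: u, b :: v =>
    obtain ⟨m, hm⟩ :=
      exists_nat_mapDomain_cons_apply k (a := a) (exists_nat_shW_apply u (b :: v)) w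
    obtain ⟨n, hn⟩ :=
      exists_nat_mapDomain_cons_apply k (a := b) (exists_nat_shW_apply (a :: u) v) w
    exact ⟨m + n, by rw [shW_cons_cons, Finsupp.add_apply, hm, hn, Nat.cast_add]⟩
  termination_by u.length + v.length

lemma shW_apply_append_ne_zero [CharZero k] (u v : List Ω) : shW k u v (u ++ v) ≠ 0 := by
  suffices ∃ n : ℕ, shW k u v (u ++ v) = n + 1 by
    obtain ⟨n, hn⟩ := this
    rw [hn]
    exact n.cast_add_one_ne_zero
  induction u with
  | nil => exact ⟨0, by simp [shW_nil_left]⟩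
  | cons a u ih =>
    cases v with
    | nil => exact ⟨0, by simp [shW_nil_right]⟩
    | cons b v =>
      obtain ⟨m, hm⟩ := ih
      obtain ⟨n, hn⟩ := exists_nat_mapDomain_cons_apply k (a := b)
        (exists_nat_shW_apply k (a :: u) v) (a :: (u ++ b :: v))
      refine ⟨m + n, ?_⟩
      rw [List.cons_append, shW_cons_cons, Finsupp.add_apply, mapDomain_cons_apply_cons_self,
        hm, hn]
      push_cast
      ring

end Shuffles

section Factorization

variable [LinearOrder Ω]

lemma IsLyndon.le_of_suffix {l p : List Ω} (hl : IsLyndon l) (hp : p ≠ []) (h : p <:+ l) :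
    l ≤ p := by
  obtain ⟨t, rfl⟩ := h
  by_cases ht : t = []
  · simp [ht]
  · exact le_of_lt (hl.2 t p ht hp rfl)

lemma le_of_suffix_flatten_reverse {L : List (List Ω)} {l p : List Ω}
    (hL : ∀ m ∈ L, IsLyndon m ∧ l ≤ m) (hp : p ≠ []) (h : p <:+ L.reverse.flatten) : l ≤ p := by
  induction L generalizing p with
  | nil => simp_all
  | cons m L ih =>
    obtain ⟨hm, hL⟩ := List.forall_mem_cons.1 hL
    obtain ⟨t, ht⟩ := h
    rw [List.reverse_cons, List.flatten_append, List.flatten_singleton] at ht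
    rcases List.append_eq_append_iff.1 ht with ⟨q, hq, rfl⟩ | ⟨q, rfl, rfl⟩
    · by_cases hq' : q = []
      · subst hq'
        simpa using hm.2
      · exact (ih hL hq' ⟨t, hq.symm⟩).trans (lex_le_append q m)
    · exact hm.2.trans (hm.1.le_of_suffix hp (List.suffix_append q p))

lemma eq_of_flatten_reverse_eq {L L' : List (List Ω)} (hL : ∀ m ∈ L, IsLyndon m)
    (hs : L.Pairwise (· ≤ ·)) (hL' : ∀ m ∈ L', IsLyndon m) (hs' : L'.Pairwise (· ≤ ·))
    (h : L.reverse.flatten = L'.reverse.flatten) : L = L' := by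
  have key {l : List Ω} {L : List (List Ω)} {l' : List Ω} {L' : List (List Ω)}
      (hL : ∀ m ∈ l :: L, IsLyndon m) (hs : (l :: L).Pairwise (· ≤ ·)) (hl' : IsLyndon l')
      (h : (l :: L).reverse.flatten = (l' :: L').reverse.flatten) : l ≤ l' := by
    refine le_of_suffix_flatten_reverse (L := l :: L) (fun m hm => ⟨hL m hm, ?_⟩) hl'.1 ?_
    · rcases List.mem_cons.1 hm with rfl | hm
      · exact le_rfl
      · exact List.rel_of_pairwise_cons hs hm
    · rw [h]
      simp
  induction L generalizing L' with
  | nil =>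
    cases L' with
    | nil => rfl
    | cons l' L' => exact absurd (by simp_all) (hL' l' (by simp)).1
  | cons l L ih =>
    cases L' with
    | nil => exact absurd (by simp_all) (hL l (by simp)).1
    | cons l' L' =>
      obtain rfl : l = l' :=
        le_antisymm (key hL hs (hL' l' (by simp)) h) (key hL' hs' (hL l (by simp)) h.symm)
      rw [ih (fun m hm => hL m (by simp [hm])) hs.of_cons (fun m hm => hL' m (by simp [hm]))
        hs'.of_cons (by simpa using h)]

lemma exists_lyndon_factorization (w : List Ω) :
    ∃ L : List (List Ω), (∀ m ∈ L, IsLyndon m) ∧ L.Pairwise (· ≤ ·) ∧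
      L.reverse.flatten = w := by
  induction hn : w.length using Nat.strong_induction_on generalizing w with
  | _ n ih =>
  by_cases hw : w = []
  · exact ⟨[], by simp [hw]⟩
  obtain ⟨l, hl, hmin⟩ := Finset.exists_min_image {p ∈ w.tails.toFinset | p ≠ []} id
    ⟨w, by simp [hw]⟩
  simp only [Finset.mem_filter, List.mem_toFinset, List.mem_tails, id] at hl hmin
  obtain ⟨⟨w', rfl⟩, hl₀⟩ := hl
  have hlyn : IsLyndon l := by
    refine ⟨hl₀, fun u v hu hv huv => lt_of_le_of_ne (hmin v ⟨?_, hv⟩) fun hlv => ?_⟩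
    · exact ⟨w' ++ u, by rw [huv, List.append_assoc]⟩
    · have := congrArg List.length huv
      rw [hlv, List.length_append] at this
      exact hu (List.length_eq_zero_iff.1 (by omega))
  obtain ⟨L, hL, hs, rfl⟩ := ih w'.length
    (by have := List.length_pos_iff.2 hl₀; rw [← hn, List.length_append]; omega) w' rfl
  refine ⟨l :: L, List.forall_mem_cons.2 ⟨hlyn, hL⟩, ?_, by simp⟩
  cases L with
  | nil => simp
  | cons m L =>
    have hlm : l ≤ m := by
      by_contra! hml
      have hle : l ≤ m ++ l := hmin (m ++ l) ⟨⟨L.reverse.flatten, by simp⟩, by simp [hl₀]⟩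
      rcases prefix_or_append_lt_of_lt hml l with ⟨t, rfl⟩ | hlt
      · have ht : t ≠ [] := by rintro rfl; simp at hml
        have hlt := hlyn.2 m t (hL m (by simp)).1 ht rfl
        exact absurd hle (not_le.2 (List.Lex.append_left _ hlt m))
      · exact absurd hle (not_le.2 hlt)
    refine List.pairwise_cons.2 ⟨fun p hp => ?_, hs⟩
    rcases List.mem_cons.1 hp with rfl | hp
    · exact hlm
    · exact hlm.trans (List.rel_of_pairwise_cons hs hp)

end Factorization

section Leading

variable [LinearOrder Ω]

/-- `v` is the largest word occurring in `x`, and all others are rearrangements of it. -/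
def IsLeadingWord (x : HW k Ω) (v : List Ω) : Prop :=
  x v ≠ 0 ∧ ∀ w, x w ≠ 0 → w ≤ v ∧ w.Perm v

variable {k}

lemma IsLeadingWord.shL_single [CharZero k] {x : HW k Ω} {v l : List Ω}
    (h : IsLeadingWord k x v) (hl : ∀ p, p ≠ [] → p <:+ v → l ≤ p) :
    IsLeadingWord k (shL k x (Finsupp.single l 1)) (v ++ l) := by
  have hsum (w : List Ω) :
      shL k x (Finsupp.single l 1) w = ∑ u ∈ x.support, x u * shW k u l w := by
    simp [shL, Finsupp.sum, Finsupp.finsetSum_apply, LinearMap.sum_apply]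
  have hlt {u w : List Ω} (hu : x u ≠ 0) (huv : u ≠ v) (hw : IsShuffle u l w) : w < v ++ l := by
    obtain ⟨hle, hperm⟩ := h.2 u hu
    obtain ⟨w', hw', hlt⟩ := hw.exists_lt hperm.length_eq (lt_of_le_of_ne hle huv)
    exact hlt.trans_le (hw'.le_append hl)
  refine ⟨?_, fun w hw => ?_⟩
  · rw [hsum, Finset.sum_eq_single v]
    · exact mul_ne_zero h.1 (shW_apply_append_ne_zero k v l)
    · intro u hu huv
      by_contra hne
      exact (hlt (Finsupp.mem_support_iff.1 hu) huv
        (isShuffle_of_shW_ne_zero k (right_ne_zero_of_mul hne))).false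
    · intro hv
      rw [Finsupp.notMem_support_iff.1 hv, zero_mul]
  · rw [hsum] at hw
    obtain ⟨u, hu, hne⟩ := Finset.exists_ne_zero_of_sum_ne_zero hw
    have hu := Finsupp.mem_support_iff.1 hu
    have hsh := isShuffle_of_shW_ne_zero k (right_ne_zero_of_mul hne)
    refine ⟨?_, hsh.perm.trans ((h.2 u hu).2.append_right l)⟩
    by_cases huv : u = v
    · subst huv
      exact hsh.le_append hl
    · exact (hlt hu huv hsh).le

lemma isLeadingWord_prod [CharZero k] {L : List (List Ω)} (hL : ∀ m ∈ L, IsLyndon m)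
    (hs : L.Pairwise (· ≤ ·)) :
    IsLeadingWord k (ShuffleAlgebra.toHW k
      (L.map fun m => (ShuffleAlgebra.toHW k).symm (Finsupp.single m 1)).prod)
      L.reverse.flatten := by
  induction L with
  | nil =>
    rw [List.map_nil, List.prod_nil, ShuffleAlgebra.toHW_one]
    refine ⟨by simp, fun w hw => ?_⟩
    obtain rfl : [] = w := by by_contra hne; exact hw (Finsupp.single_eq_of_ne' hne)
    exact ⟨le_rfl, .refl _⟩
  | cons l L ih =>
    rw [List.map_cons, List.prod_cons, mul_comm, ShuffleAlgebra.toHW_mul,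
      LinearEquiv.apply_symm_apply, List.reverse_cons, List.flatten_append,
      List.flatten_singleton]
    refine (ih (fun m hm => hL m (by simp [hm])) hs.of_cons).shL_single fun p hp hps => ?_
    exact le_of_suffix_flatten_reverse
      (fun m hm => ⟨hL m (by simp [hm]), List.rel_of_pairwise_cons hs hm⟩) hp hps

/-- The concatenation, in decreasing order, of a multiset of Lyndon words. -/
def lyndonWord (m : {w : List Ω // IsLyndon w} →₀ ℕ) : List Ω :=
  ((Finsupp.toMultiset m).sort.map Subtype.val).reverse.flatten

lemma lyndonWord_injective :
    Function.Injective (lyndonWord : ({w : List Ω // IsLyndon w} →₀ ℕ) → List Ω) := by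
  intro m m' h
  have hs (s : Multiset {w : List Ω // IsLyndon w}) :
      (s.sort.map Subtype.val).Pairwise (· ≤ ·) :=
    List.pairwise_map.2 (Multiset.pairwise_sort s _)
  have hl (s : Multiset {w : List Ω // IsLyndon w}) :
      ∀ w ∈ s.sort.map Subtype.val, IsLyndon w := by
    intro w hw
    obtain ⟨l, -, rfl⟩ := List.mem_map.1 hw
    exact l.2
  have := List.map_injective_iff.2 Subtype.val_injective
    (eq_of_flatten_reverse_eq (hl _) (hs _) (hl _) (hs _) h)
  apply Multiset.toFinsupp.symm.injective
  change Finsupp.toMultiset m = Finsupp.toMultiset m'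
  rw [← Multiset.sort_eq (Finsupp.toMultiset m) (· ≤ ·), this, Multiset.sort_eq]

lemma lyndonWord_surjective :
    Function.Surjective (lyndonWord : ({w : List Ω // IsLyndon w} →₀ ℕ) → List Ω) := by
  intro w
  obtain ⟨L, hL, hs, rfl⟩ := exists_lyndon_factorization w
  lift L to List {w : List Ω // IsLyndon w} using hL
  have hs' : L.Pairwise (· ≤ ·) := by
    rw [List.pairwise_map] at hs
    exact hs
  refine ⟨Multiset.toFinsupp L, ?_⟩
  rw [lyndonWord, Multiset.toFinsupp_toMultiset, Multiset.coe_sort,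
    List.mergeSort_eq_self (· ≤ ·) hs']

/-- The algebra homomorphism from the polynomial algebra on Lyndon words to the shuffle algebra. -/
def lyndonHom (k : Type*) [Field k] (Ω : Type*) [LinearOrder Ω] :
    MvPolynomial {w : List Ω // IsLyndon w} k →ₐ[k] ShuffleAlgebra k Ω :=
  MvPolynomial.aeval fun w => (ShuffleAlgebra.toHW k).symm (Finsupp.single (w : List Ω) 1)

lemma isLeadingWord_lyndonHom_monomial [CharZero k] (m : {w : List Ω // IsLyndon w} →₀ ℕ) :
    IsLeadingWord k (ShuffleAlgebra.toHW k (lyndonHom k Ω (MvPolynomial.monomial m 1)))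
      (lyndonWord m) := by
  have h := isLeadingWord_prod (k := k) (L := (Finsupp.toMultiset m).sort.map Subtype.val)
    (by simp +contextual) (List.pairwise_map.2 (Multiset.pairwise_sort _ _))
  rw [List.map_map, ← Multiset.prod_coe, ← Multiset.map_coe, Multiset.sort_eq,
    Finsupp.toMultiset_map, Finsupp.prod_toMultiset,
    Finsupp.prod_mapDomain_index (by simp) (by simp [pow_add])] at h
  rw [lyndonHom, MvPolynomial.aeval_monomial, map_one, one_mul]
  exact h

variable [CharZero k]

lemma lyndonHom_injective : Function.Injective (lyndonHom k Ω) := by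
  rw [injective_iff_map_eq_zero]
  intro p hp
  by_contra hp₀
  obtain ⟨m, hm, hmax⟩ := Finset.exists_max_image p.support lyndonWord
    (MvPolynomial.support_nonempty.2 hp₀)
  have hexp : ShuffleAlgebra.toHW k (lyndonHom k Ω p) (lyndonWord m) =
      ∑ n ∈ p.support, p.coeff n * ShuffleAlgebra.toHW k
        (lyndonHom k Ω (MvPolynomial.monomial n 1)) (lyndonWord m) := by
    conv_lhs => rw [p.as_sum]
    rw [map_sum, map_sum, Finsupp.finsetSum_apply]
    refine Finset.sum_congr rfl fun n _ => ?_
    rw [← mul_one (p.coeff n), ← smul_eq_mul, ← MvPolynomial.smul_monomial, map_smul, map_smul,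
      Finsupp.smul_apply, smul_eq_mul, smul_eq_mul, mul_one]
  rw [hp, map_zero, Finsupp.zero_apply, Finset.sum_eq_single m] at hexp
  · exact mul_ne_zero (MvPolynomial.mem_support_iff.1 hm)
      (isLeadingWord_lyndonHom_monomial m).1 hexp.symm
  · intro n hn hnm
    by_contra hne
    have hle := ((isLeadingWord_lyndonHom_monomial n).2 _ (right_ne_zero_of_mul hne)).1
    exact hnm (lyndonWord_injective (le_antisymm (hmax n hn) hle))
  · exact fun h => absurd hm h

lemma single_mem_range_lyndonHom (w : List Ω) :
    Finsupp.single w (1 : k) ∈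
      LinearMap.range ((ShuffleAlgebra.toHW k).toLinearMap ∘ₗ (lyndonHom k Ω).toLinearMap) := by
  set R := LinearMap.range
    ((ShuffleAlgebra.toHW k).toLinearMap ∘ₗ (lyndonHom k Ω).toLinearMap)
  induction hn : Finset.card {u ∈ w.permutations.toFinset | u < w} using Nat.strong_induction_on
    generalizing w with
  | _ n ih =>
  obtain ⟨m, rfl⟩ := lyndonWord_surjective w
  obtain ⟨hne, hlead⟩ := isLeadingWord_lyndonHom_monomial (k := k) m
  set x := ShuffleAlgebra.toHW k (lyndonHom k Ω (MvPolynomial.monomial m 1))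
  set w := lyndonWord m
  have hxR : x ∈ R := ⟨MvPolynomial.monomial m 1, rfl⟩
  have hrest : x.erase w ∈ R := by
    rw [← Finsupp.sum_single (x.erase w)]
    refine Submodule.sum_mem _ fun u hu => ?_
    rw [Finsupp.support_erase, Finset.mem_erase, Finsupp.mem_support_iff] at hu
    obtain ⟨hle, hperm⟩ := hlead u hu.2
    have hlt := lt_of_le_of_ne hle hu.1
    rw [← mul_one (x.erase w u), ← smul_eq_mul, ← Finsupp.smul_single]
    refine R.smul_mem _ (ih _ ?_ u rfl)
    rw [← hn]
    refine Finset.card_lt_card ⟨fun v hv => ?_, fun hsub => ?_⟩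
    · simp only [Finset.mem_filter, List.mem_toFinset, List.mem_permutations] at hv ⊢
      exact ⟨hv.1.trans hperm, hv.2.trans hlt⟩
    · have := @hsub u (by simp [hperm, hlt])
      simp at this
  have hw : Finsupp.single w (1 : k) = (x w)⁻¹ • (x - x.erase w) := by
    rw [sub_eq_of_eq_add (Finsupp.single_add_erase w x).symm, Finsupp.smul_single, smul_eq_mul,
      inv_mul_cancel₀ hne]
  rw [hw]
  exact R.smul_mem _ (R.sub_mem hxR hrest)

lemma lyndonHom_surjective : Function.Surjective (lyndonHom k Ω) := by
  suffices h : LinearMap.range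
      ((ShuffleAlgebra.toHW k).toLinearMap ∘ₗ (lyndonHom k Ω).toLinearMap) = ⊤ by
    intro y
    obtain ⟨p, hp⟩ := LinearMap.range_eq_top.1 h (ShuffleAlgebra.toHW k y)
    exact ⟨p, (ShuffleAlgebra.toHW k).injective hp⟩
  rw [eq_top_iff]
  intro x _
  rw [← Finsupp.sum_single x]
  refine Submodule.sum_mem _ fun w _ => ?_
  rw [← mul_one (x w), ← smul_eq_mul, ← Finsupp.smul_single]
  exact Submodule.smul_mem _ _ (single_mem_range_lyndonHom w)

end Leading

/-- **Radford's theorem.**  Over a field of characteristic zero, the shuffle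
algebra of words over a totally ordered alphabet is, as a commutative algebra,
freely generated by the Lyndon words: there is a `k`-linear bijection from the
polynomial algebra on the set of Lyndon words which sends `1` to the empty word,
is multiplicative (from the polynomial product to the shuffle product `⧢`), and
sends the variable indexed by a Lyndon word `w` to the word `w`. -/
theorem radford_shuffle_polynomial_on_lyndon_words
    (k : Type*) [Field k] [CharZero k] (Ω : Type*) [LinearOrder Ω] :
    ∃ Φ : MvPolynomial {w : List Ω // IsLyndon w} k →ₗ[k] HW k Ω,
      Φ 1 = Finsupp.single [] 1 ∧
      (∀ p q : MvPolynomial {w : List Ω // IsLyndon w} k,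
        Φ (p * q) = shL k (Φ p) (Φ q)) ∧
      (∀ w : {w : List Ω // IsLyndon w},
        Φ (MvPolynomial.X w) = Finsupp.single (w : List Ω) 1) ∧
      Function.Bijective Φ := by
  refine ⟨(ShuffleAlgebra.toHW k).toLinearMap ∘ₗ (lyndonHom k Ω).toLinearMap, ?_, ?_, ?_, ?_⟩
  · simp [ShuffleAlgebra.toHW_one]
  · simp [ShuffleAlgebra.toHW_mul]
  · simp [lyndonHom]
  · exact (ShuffleAlgebra.toHW k).bijective.comp ⟨lyndonHom_injective, lyndonHom_surjective⟩
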